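/- Let n ≥ 1 and let (a_1, ..., a_n) be a sequence of positive integers that is a solution of Problem I, of Problem II, or of Problem III. Then there exists at least one index i with 1 ≤ i ≤ n such that a_i = 1. -/

import Mathlib

open Matrix

def elemMat (a : ℤ) : Matrix (Fin 2) (Fin 2) ℤ := !![a, -1; 1, 0]

/-- `M (a₁ :: ... :: aₙ)` is the product `E(aₙ) ⋯ E(a₁)` with the factor for `a₁` rightmost. -/
def M : List ℤ → Matrix (Fin 2) (Fin 2) ℤ
  | [] => 1
  | a :: t => M t * elemMat a

/-!
If every entry of a nonempty list `l` has absolute value at least `2`, the bottom row `(r, s)` of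
`M l` satisfies `|s| < |r|`: it is `(1, 0)` for a single entry, and multiplying by `elemMat a`
turns `(r, s)` into `(r * a + s, -r)`. In particular the lower-left entry of `M l` does not vanish.
A power of `M l` is `M` of a repetition of `l`, so no positive power of `M l` is upper triangular,
whereas in each of the three problems `M l ^ 4 = 1`.
-/

theorem abs_lt_abs_mul_add {R : Type*} [Ring R] [LinearOrder R] [IsOrderedRing R] {r s a : R}
    (hs : |s| < |r|) (ha : 2 ≤ |a|) : |r| < |r * a + s| :=
  calc
    |r| < |r| * 2 - |s| := by rw [mul_two]; exact lt_sub_iff_add_lt.mpr (by gcongr)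
    _ ≤ |r * a| - |s| := by rw [abs_mul]; gcongr
    _ ≤ |r * a + s| := by simpa using abs_sub_abs_le_abs_sub (r * a) (-s)

theorem M_cons_one_zero (a : ℤ) (l : List ℤ) : M (a :: l) 1 0 = M l 1 0 * a + M l 1 1 := by
  simp [M, elemMat, mul_apply]

theorem M_cons_one_one (a : ℤ) (l : List ℤ) : M (a :: l) 1 1 = -M l 1 0 := by
  simp [M, elemMat, mul_apply]

theorem M_append (l l' : List ℤ) : M (l ++ l') = M l' * M l := by
  induction l with
  | nil => simp [M]
  | cons a t ih => simp [M, ih, mul_assoc]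

theorem M_flatten_replicate (k : ℕ) (l : List ℤ) : M (List.replicate k l).flatten = M l ^ k := by
  induction k with
  | zero => simp [M]
  | succ k ih => rw [List.replicate_succ, List.flatten_cons, M_append, ih, pow_succ]

theorem abs_M_one_one_lt_abs_M_one_zero {l : List ℤ} (hne : l ≠ []) (hl : ∀ x ∈ l, 2 ≤ |x|) :
    |M l 1 1| < |M l 1 0| := by
  induction l, hne using List.recNeNil with
  | singleton a => simp [M, elemMat]
  | cons a t _ ih =>
    obtain ⟨ha, ht⟩ := List.forall_mem_cons.mp hl
    rw [M_cons_one_zero, M_cons_one_one, abs_neg]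
    exact abs_lt_abs_mul_add (ih ht) ha

theorem M_one_zero_ne_zero {l : List ℤ} (hne : l ≠ []) (hl : ∀ x ∈ l, 2 ≤ |x|) : M l 1 0 ≠ 0 :=
  abs_pos.mp ((abs_nonneg _).trans_lt (abs_M_one_one_lt_abs_M_one_zero hne hl))

theorem exists_one_entry_general {l : List ℤ} (hne : l ≠ []) {k : ℕ} (hk : k ≠ 0)
    (h : (M l ^ k) 1 0 = 0) : ∃ x ∈ l, |x| ≤ 1 := by
  by_contra! hl
  rw [← M_flatten_replicate] at h
  refine M_one_zero_ne_zero (by simp [hk, hne]) (fun x hx ↦ ?_) h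
  obtain ⟨l', hl', hx⟩ := List.mem_flatten.mp hx
  exact hl x (List.eq_of_mem_replicate hl' ▸ hx)

/-- Every solution of Problem I, II or III contains an entry equal to 1. -/
theorem exists_one_entry (l : List ℤ) (hne : l ≠ []) (hpos : ∀ x ∈ l, 0 < x)
    (h : M l = 1 ∨ M l = -1 ∨ (M l) ^ 2 = -1) :
    (1 : ℤ) ∈ l := by
  have hM : M l ^ 4 = 1 := by
    rw [show 4 = 2 * 2 from rfl, pow_mul]
    rcases h with h | h | h <;> simp [h]
  obtain ⟨x, hx, hx1⟩ := exists_one_entry_general hne four_ne_zero (by simp [hM])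
  rwa [le_antisymm (le_of_abs_le hx1) (hpos x hx)] at hx
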